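/- arXiv:2511.21283 — 5 statements merged into one kernel-verified Lean document; each statement's English description precedes it below -/
import Mathlib

section
/- Let U ⊆ ℂ \ {0} be a nonempty connected open set and let f₁, f₂ be holomorphic and nowhere vanishing on U. Suppose x·f₁'(x)/f₁(x) = f₂(x) and x·f₂'(x)/f₂(x) = f₁(x) for all x ∈ U. Then f₂ - f₁ is constant on U; that is, there exists c ∈ ℂ with f₂(x) = f₁(x) + c for all x ∈ U. -/
/-- On a nonempty connected open set `U ⊆ ℂ \ {0}`, any period-2 pair `(f₁, f₂)` of the
dual logarithmic derivative operator has constant difference: `f₂ = f₁ + c` on `U`. -/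
theorem period2_constant_difference (U : Set ℂ) (hUopen : IsOpen U) (hUconn : IsConnected U)
    (hU : ∀ x ∈ U, x ≠ 0)
    (f₁ f₂ : ℂ → ℂ)
    (hd₁ : DifferentiableOn ℂ f₁ U)
    (hd₂ : DifferentiableOn ℂ f₂ U)
    (hnz₁ : ∀ x ∈ U, f₁ x ≠ 0)
    (hnz₂ : ∀ x ∈ U, f₂ x ≠ 0)
    (hA₁ : ∀ x ∈ U, x * deriv f₁ x / f₁ x = f₂ x)
    (hA₂ : ∀ x ∈ U, x * deriv f₂ x / f₂ x = f₁ x) :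
    ∃ c : ℂ, ∀ x ∈ U, f₂ x = f₁ x + c := by
  -- Clearing denominators, both `x * deriv f₁ x` and `x * deriv f₂ x` equal
  -- `f₁ x * f₂ x`; as `x ≠ 0`, the
  -- derivatives agree on the connected open set `U`.
  have hderiv : U.EqOn (deriv f₂) (deriv f₁) := by
    intro x hx
    have h₁ := (div_eq_iff (hnz₁ x hx)).mp (hA₁ x hx)
    have h₂ := (div_eq_iff (hnz₂ x hx)).mp (hA₂ x hx)
    exact mul_left_cancel₀ (hU x hx) (by rw [h₁, h₂, mul_comm])
  obtain ⟨c, hc⟩ := hUopen.exists_eq_add_of_deriv_eq hUconn.isPreconnected hd₂ hd₁ hderiv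
  exact ⟨c, fun x hx => hc hx⟩
end

section
/- Let U ⊆ ℂ \ {0} be a nonempty connected open set and let f₁, f₂ be holomorphic and nowhere vanishing on U with x·f₁'(x)/f₁(x) = f₂(x) and x·f₂'(x)/f₂(x) = f₁(x) for all x ∈ U. If moreover f₁(x₀) ≠ f₂(x₀) for some x₀ ∈ U, then there exists a nonzero constant c ∈ ℂ with f₂(x) = f₁(x) + c for all x ∈ U. -/
/-- On a nonempty connected open set `U ⊆ ℂ \ {0}`, a nondegenerate period-2 pair
`(f₁, f₂)` of the dual logarithmic derivative operator satisfies `f₂ = f₁ + c`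
for some nonzero constant `c`. -/
theorem period2_nonzero_constant_difference (U : Set ℂ) (hUopen : IsOpen U)
    (hUconn : IsConnected U) (hU : ∀ x ∈ U, x ≠ 0)
    (f₁ f₂ : ℂ → ℂ)
    (hd₁ : DifferentiableOn ℂ f₁ U)
    (hd₂ : DifferentiableOn ℂ f₂ U)
    (hnz₁ : ∀ x ∈ U, f₁ x ≠ 0)
    (hnz₂ : ∀ x ∈ U, f₂ x ≠ 0)
    (hA₁ : ∀ x ∈ U, x * deriv f₁ x / f₁ x = f₂ x)
    (hA₂ : ∀ x ∈ U, x * deriv f₂ x / f₂ x = f₁ x)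
    (hne : ∃ x₀ ∈ U, f₁ x₀ ≠ f₂ x₀) :
    ∃ c : ℂ, c ≠ 0 ∧ ∀ x ∈ U, f₂ x = f₁ x + c := by
  -- Both `x * deriv f₁ x` and `x * deriv f₂ x` equal `f₁ x * f₂ x`, and `x ≠ 0`.
  have hderiv : U.EqOn (deriv f₂) (deriv f₁) := by
    intro x hx
    have h₁ := (div_eq_iff (hnz₁ x hx)).mp (hA₁ x hx)
    have h₂ := (div_eq_iff (hnz₂ x hx)).mp (hA₂ x hx)
    exact mul_left_cancel₀ (hU x hx) (by rw [h₁, h₂, mul_comm])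
  obtain ⟨c, hc⟩ :=
    hUopen.exists_eq_add_of_deriv_eq hUconn.isPreconnected hd₂ hd₁ hderiv
  obtain ⟨x₀, hx₀, hne₀⟩ := hne
  refine ⟨c, ?_, fun x hx => hc hx⟩
  rintro rfl
  exact hne₀ (by simpa using (hc hx₀).symm)
end

section
/- Let U be a nonempty connected open subset of the slit plane ℂ \ (-∞, 0] (so 0 ∉ U), and let f₁, f₂ be holomorphic and nowhere vanishing on U with x·f₁'(x)/f₁(x) = f₂(x) and x·f₂'(x)/f₂(x) = f₁(x) for all x ∈ U, and with f₁ not identically equal to f₂ on U. Then there exist nonzero complex constants a and c such that for all x ∈ U, f₁(x) = c·a·x^c/(1 - a·x^c) and f₂(x) = c/(1 - a·x^c), where x^c denotes the principal branch of the complex power. -/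
/-!
Both equations say `x f₁' = f₁ f₂ = x f₂'`, so `f₂ - f₁` is a constant `c` on the connected set
`U`, nonzero by nondegeneracy. The quotient `g = f₁ / f₂` then satisfies `x g' = c g`, so
`g / x ^ c` is a constant `a`. Solving `f₂ - f₁ = c`, `f₁ = a x ^ c f₂` gives the formulas.
-/

/-- Classification of nondegenerate period-2 orbits of the dual logarithmic derivative
operator on a nonempty connected open subset of the slit plane: any such pair is of the
form `f₁ x = c a x^c / (1 - a x^c)`, `f₂ x = c / (1 - a x^c)` with `a, c ≠ 0`,
where `x ^ c` is the principal complex power. -/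
theorem period2_classification (U : Set ℂ) (hUopen : IsOpen U) (hUconn : IsConnected U)
    (hUslit : U ⊆ Complex.slitPlane) (hU0 : (0 : ℂ) ∉ U)
    (f₁ f₂ : ℂ → ℂ)
    (hd₁ : DifferentiableOn ℂ f₁ U)
    (hd₂ : DifferentiableOn ℂ f₂ U)
    (hnz₁ : ∀ x ∈ U, f₁ x ≠ 0)
    (hnz₂ : ∀ x ∈ U, f₂ x ≠ 0)
    (hA₁ : ∀ x ∈ U, x * deriv f₁ x / f₁ x = f₂ x)
    (hA₂ : ∀ x ∈ U, x * deriv f₂ x / f₂ x = f₁ x)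
    (hne : ∃ x₀ ∈ U, f₁ x₀ ≠ f₂ x₀) :
    ∃ a c : ℂ, a ≠ 0 ∧ c ≠ 0 ∧
      ∀ x ∈ U, f₁ x = c * a * x ^ c / (1 - a * x ^ c) ∧
        f₂ x = c / (1 - a * x ^ c) := by
  obtain ⟨x₀, hx₀, hne₀⟩ := hne
  have hxne : ∀ x ∈ U, x ≠ 0 := fun x hx h => hU0 (h ▸ hx)
  have hD₁ : ∀ x ∈ U, HasDerivAt f₁ (f₁ x * f₂ x / x) x := by
    intro x hx
    have h := (hd₁.differentiableAt (hUopen.mem_nhds hx)).hasDerivAt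
    refine h.congr_deriv ?_
    have h1 := hnz₁ x hx
    have h2 := hxne x hx
    rw [← hA₁ x hx]
    field_simp
  have hD₂ : ∀ x ∈ U, HasDerivAt f₂ (f₁ x * f₂ x / x) x := by
    intro x hx
    have h := (hd₂.differentiableAt (hUopen.mem_nhds hx)).hasDerivAt
    refine h.congr_deriv ?_
    have h1 := hnz₂ x hx
    have h2 := hxne x hx
    rw [← hA₂ x hx]
    field_simp
  have hconst : ∀ F : ℂ → ℂ, (∀ x ∈ U, HasDerivAt F 0 x) → ∀ x ∈ U, F x = F x₀ :=
    fun F hF x hx => hUopen.is_const_of_deriv_eq_zero hUconn.isPreconnected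
      (fun y hy => (hF y hy).differentiableAt.differentiableWithinAt)
      (fun y hy => (hF y hy).deriv) hx hx₀
  obtain ⟨c, hc⟩ : ∃ c, c = f₂ x₀ - f₁ x₀ := ⟨_, rfl⟩
  have hc0 : c ≠ 0 := hc ▸ sub_ne_zero.mpr hne₀.symm
  have hdiff : ∀ x ∈ U, f₂ x - f₁ x = c := by
    rw [hc]
    refine hconst (fun x => f₂ x - f₁ x) fun x hx => ?_
    simpa using (hD₂ x hx).fun_sub (hD₁ x hx)
  have hpow : ∀ x ∈ U, x ^ c ≠ 0 := fun x hx => by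
    simp [Complex.cpow_eq_zero_iff, hxne x hx]
  have hquot : ∀ x ∈ U, f₁ x / (f₂ x * x ^ c) = f₁ x₀ / (f₂ x₀ * x₀ ^ c) := by
    refine hconst (fun x => f₁ x / (f₂ x * x ^ c)) fun x hx => ?_
    have h2 := hnz₂ x hx
    have h3 := hpow x hx
    have h4 := hxne x hx
    have hp : HasDerivAt (fun y : ℂ => y ^ c) (c * x ^ c / x) x := by
      have h := (hasDerivAt_id x).cpow_const (c := c) (hUslit hx)
      refine h.congr_deriv ?_
      simp [Complex.cpow_sub _ _ h4, mul_div_assoc]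
    refine ((hD₁ x hx).fun_div ((hD₂ x hx).fun_mul hp) (mul_ne_zero h2 h3)).congr_deriv ?_
    have hf₂ : f₂ x = c + f₁ x := by rw [← hdiff x hx]; ring
    rw [hf₂] at h2 ⊢
    field_simp
    ring
  refine ⟨f₁ x₀ / (f₂ x₀ * x₀ ^ c), c, div_ne_zero (hnz₁ x₀ hx₀)
    (mul_ne_zero (hnz₂ x₀ hx₀) (hpow x₀ hx₀)), hc0, fun x hx => ?_⟩
  rw [← hquot x hx]
  have h2 := hnz₂ x hx
  have h3 := hpow x hx
  have hax : f₁ x / (f₂ x * x ^ c) * x ^ c = f₁ x / f₂ x := by field_simp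
  have hden : 1 - f₁ x / f₂ x = c / f₂ x := by
    rw [← hdiff x hx]
    field_simp
  rw [mul_assoc c, hax, hden]
  constructor <;> field_simp
end

section
/- Let U be a nonempty connected open subset of the slit plane ℂ \ (-∞, 0] (so 0 ∉ U), and let f be holomorphic and nowhere vanishing on U with x·f'(x)/f(x) = f(x) for all x ∈ U. Then there exists a constant a ∈ ℂ such that f(x) = 1/(a - Log x) for all x ∈ U, where Log denotes the principal branch of the complex logarithm. -/
/-!
Multiplying out, the fixed-point equation says that `x` times the derivative of `f` is `f ^ 2`,
so the derivative of `1 / f` is `-1 / x`. Hence `1 / f + Log` has zero derivative on the connected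
open set `U`; it is a constant `a`, and solving for `f` gives the formula.
-/

/-- Classification of fixed points of the dual logarithmic derivative operator on a
nonempty connected open subset of the slit plane: any holomorphic nowhere-vanishing
solution of `x f'(x) / f(x) = f(x)` is of the form `f x = 1 / (a - Log x)` for some
constant `a`, where `Log` is the principal complex logarithm. -/
theorem fixed_point_classification (U : Set ℂ) (hUopen : IsOpen U) (hUconn : IsConnected U)
    (hUslit : U ⊆ Complex.slitPlane) (hU0 : (0 : ℂ) ∉ U)
    (f : ℂ → ℂ)
    (hd : DifferentiableOn ℂ f U)
    (hnz : ∀ x ∈ U, f x ≠ 0)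
    (hfix : ∀ x ∈ U, x * deriv f x / f x = f x) :
    ∃ a : ℂ, ∀ x ∈ U, f x = 1 / (a - Complex.log x) := by
  have key : ∀ x ∈ U, HasDerivAt (fun z => (f z)⁻¹ + Complex.log z) 0 x := by
    intro x hx
    have hx0 : x ≠ 0 := fun h => hU0 (h ▸ hx)
    have hf := (hd.differentiableAt (hUopen.mem_nhds hx)).hasDerivAt
    have hsum := (hf.fun_inv (hnz x hx)).add (Complex.hasDerivAt_log (hUslit hx))
    have hmul : x * deriv f x = f x * f x := (div_eq_iff (hnz x hx)).mp (hfix x hx)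
    have hzero : -deriv f x / f x ^ 2 + x⁻¹ = 0 := by
      have := hnz x hx
      field_simp
      linear_combination -hmul
    rw [hzero] at hsum
    exact hsum
  obtain ⟨a, ha⟩ := hUopen.exists_is_const_of_deriv_eq_zero hUconn.isPreconnected
    (fun x hx => (key x hx).differentiableAt.differentiableWithinAt)
    (fun x hx => (key x hx).deriv)
  refine ⟨a, fun x hx => ?_⟩
  rw [← ha x hx, add_sub_cancel_right, one_div, inv_inv]
end

section
/- Define the operator A on functions ℂ → ℂ by (A f)(x) = x · (deriv f)(x) / f(x), and let f(z) = z/(1 + z). Then for every complex x with x ≠ 0 and 1 + x ≠ 0, the third iterate of A applied to f agrees with the first iterate: (A (A (A f)))(x) = (A f)(x). In other words, the logistic-induced function f is pre-periodic under A, entering a period-2 orbit after one iterate. -/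
/-- The dual logarithmic derivative operator acting on functions `ℂ → ℂ`. -/
noncomputable def dldOp (f : ℂ → ℂ) : ℂ → ℂ := fun x => x * deriv f x / f x

/-! Write `A` for `dldOp` and `f z = z / (1 + z)`. Then `A f = 1 / (1 + z)`, and
`A (1 / (1 + z)) = -z / (1 + z) = -f`. Since `A` ignores nonzero constant factors,
`A (-f) = A f`, which closes the 2-cycle. These identities hold only on the open set
`z ≠ 0`, `1 + z ≠ 0` (at `z = 0` the division `0 / 0 = 0` spoils the first one); as `A` is a
local operator, equality near the point (`dldOp_congr`) is enough to iterate. -/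

/-- `dldOp f x` depends only on the germ of `f` at `x`. -/
lemma dldOp_congr {f g : ℂ → ℂ} {x : ℂ} (h : f =ᶠ[nhds x] g) : dldOp f x = dldOp g x := by
  simp only [dldOp, h.deriv_eq, h.eq_of_nhds]

lemma dldOp_neg (f : ℂ → ℂ) : dldOp (fun z => -f z) = dldOp f := by
  funext x
  simp only [dldOp, deriv.fun_neg, mul_neg, neg_div_neg_eq]

lemma dldOp_logistic {x : ℂ} (hx : x ≠ 0) (h1x : 1 + x ≠ 0) :
    dldOp (fun z : ℂ => z / (1 + z)) x = 1 / (1 + x) := by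
  have h : HasDerivAt (fun z : ℂ => z / (1 + z)) ((1 * (1 + x) - x * 1) / (1 + x) ^ 2) x :=
    (hasDerivAt_id' x).fun_div ((hasDerivAt_id' x).const_add 1) h1x
  simp only [dldOp, h.deriv]
  field_simp
  ring

lemma dldOp_one_div_one_add {x : ℂ} (h1x : 1 + x ≠ 0) :
    dldOp (fun z : ℂ => 1 / (1 + z)) x = -(x / (1 + x)) := by
  have h : HasDerivAt (fun z : ℂ => 1 / (1 + z)) ((0 * (1 + x) - 1 * 1) / (1 + x) ^ 2) x :=
    (hasDerivAt_const x 1).fun_div ((hasDerivAt_id' x).const_add 1) h1x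
  simp only [dldOp, h.deriv]
  field_simp
  ring

/-- The logistic-induced function `f z = z / (1 + z)` is pre-periodic under the dual
logarithmic derivative operator: its third iterate agrees with its first iterate at
every `x ≠ 0` with `1 + x ≠ 0`, i.e. it enters a period-2 orbit after one iterate. -/
theorem logistic_preperiodic (x : ℂ) (hx : x ≠ 0) (h1x : 1 + x ≠ 0) :
    dldOp (dldOp (dldOp (fun z : ℂ => z / (1 + z)))) x =
      dldOp (fun z : ℂ => z / (1 + z)) x := by
  have hopen : IsOpen {z : ℂ | z ≠ 0 ∧ 1 + z ≠ 0} :=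
    isOpen_ne.inter (isOpen_ne_fun (by fun_prop) (by fun_prop))
  have h2 : dldOp (dldOp (fun z : ℂ => z / (1 + z))) =ᶠ[nhds x] fun z => -(z / (1 + z)) := by
    filter_upwards [hopen.mem_nhds ⟨hx, h1x⟩] with y hy
    have h1 : dldOp (fun z : ℂ => z / (1 + z)) =ᶠ[nhds y] fun z => 1 / (1 + z) := by
      filter_upwards [hopen.mem_nhds hy] with z hz using dldOp_logistic hz.1 hz.2
    rw [dldOp_congr h1, dldOp_one_div_one_add hy.2]
  rw [dldOp_congr h2, dldOp_neg]
end
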